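/- There exist constants c > 0, δ > 0, and N such that for every n ≥ N there are a monotone Boolean function f_n on n variables, a distribution μ_n on f_n⁻¹(1), and a real ε_n ∈ (0, 1) satisfying: (i) there exists a CNF formula φ_n with |φ_n| ≤ n^c, φ_n⁻¹(1) ⊆ f_n⁻¹(1), and Pr_{x∼μ_n}[φ_n(x) = 1] ≥ ε_n; and (ii) every monotone CNF formula ψ with ψ⁻¹(1) ⊆ f_n⁻¹(1) and Pr_{x∼μ_n}[ψ(x) = 1] ≥ ε_n has |ψ| ≥ 2^{n^δ}. -/

import Mathlib

/-!
The separating function is `f = ⋁ i < m, (x_i ∧ y_i)` with `m = ⌊n/2⌋`, the blocks `x` and `y` being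
disjoint sets of `m` coordinates. The nonmonotone CNF `(⋁ x_i) ∧ ⋀ (¬ x_i ∨ y_i)` has at most `m + 1`
clauses, implies `f`, and accepts every minimal one of `f` (the points `p_i` with
`x_i = y_i = 1` and zeros elsewhere). Take `μ` uniform on the `p_i` and `ε = 1 - 1/(2m)`, so that a
CNF reaching probability `ε` must accept every `p_i`.

If such a CNF `ψ` is monotone, each of its clauses contains `x_i` or `y_i` for every `i`. For each
`z ∈ {0,1}^m` the point `x = z`, `y = ¬z` is a zero of `f`, hence falsifies a clause of `ψ`; that
clause contains `y_i` exactly when `z_i = 1`, so it determines `z`. Thus `ψ` has at least `2^m`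
clauses (`two_pow_le_card`).
-/

/-- A literal over `n` variables: a coordinate `x_i` (if `neg = false`)
or its negation `¬ x_i` (if `neg = true`). -/
structure Lit (n : ℕ) where
  idx : Fin n
  neg : Bool
deriving DecidableEq

/-- Evaluation of a literal at an assignment. -/
def Lit.eval {n : ℕ} (l : Lit n) (x : Fin n → Bool) : Bool :=
  if l.neg then !(x l.idx) else x l.idx

/-- A clause: a finite set of literals, evaluated as their disjunction. -/
abbrev Clause (n : ℕ) := Finset (Lit n)

/-- A CNF formula: a finite set of clauses, evaluated as their conjunction.
Its size is its number of clauses (`Finset.card`). -/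
abbrev CNF (n : ℕ) := Finset (Clause n)

/-- `φ.sat x` means the CNF formula `φ` evaluates to `1` at `x`. -/
def CNF.sat {n : ℕ} (φ : CNF n) (x : Fin n → Bool) : Prop :=
  ∀ c ∈ φ, ∃ l ∈ c, l.eval x = true

instance {n : ℕ} (φ : CNF n) (x : Fin n → Bool) : Decidable (φ.sat x) :=
  inferInstanceAs (Decidable (∀ c ∈ φ, ∃ l ∈ c, Lit.eval l x = true))

/-- `φ⁻¹(1) ⊆ f⁻¹(1)`: the formula does not err on inputs where `f` is `0`. -/
def CNF.onesided {n : ℕ} (φ : CNF n) (f : (Fin n → Bool) → Bool) : Prop :=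
  ∀ x, φ.sat x → f x = true

/-- A CNF formula is monotone if none of its literals is negated. -/
def CNF.mono {n : ℕ} (φ : CNF n) : Prop :=
  ∀ c ∈ φ, ∀ l ∈ c, l.neg = false

/-- A distribution on `f⁻¹(1)`: nonnegative, supported on `f⁻¹(1)`, summing to 1. -/
def IsDistOn {n : ℕ} (μ : (Fin n → Bool) → ℝ) (f : (Fin n → Bool) → Bool) : Prop :=
  (∀ x, 0 ≤ μ x) ∧ (∀ x, f x = false → μ x = 0) ∧ (∑ x, μ x) = 1

/-- `Pr_{x ∼ μ}[φ(x) = 1]`. -/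
noncomputable def CNF.pr {n : ℕ} (φ : CNF n) (μ : (Fin n → Bool) → ℝ) : ℝ :=
  ∑ x, if φ.sat x then μ x else 0

/-- `D_μ(f)`: the maximum, over CNF formulas `φ` with `φ⁻¹(1) ⊆ f⁻¹(1)` and `|φ| ≥ 1`,
of `Pr_{x∼μ}[φ(x)=1] / |φ|` (0 if there is no such formula). -/
noncomputable def Dmu {n : ℕ} (f : (Fin n → Bool) → Bool) (μ : (Fin n → Bool) → ℝ) : ℝ :=
  sSup {r : ℝ | ∃ φ : CNF n, φ.onesided f ∧ 1 ≤ φ.card ∧ r = φ.pr μ / φ.card}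

/-- `D(f)`: the minimum of `D_μ(f)` over distributions `μ` on `f⁻¹(1)`. -/
noncomputable def Dof {n : ℕ} (f : (Fin n → Bool) → Bool) : ℝ :=
  sInf {r : ℝ | ∃ μ, IsDistOn μ f ∧ r = Dmu f μ}

/-- The monotone variant `D⁺_μ(f)`, restricted to monotone CNF formulas. -/
noncomputable def DmuPlus {n : ℕ} (f : (Fin n → Bool) → Bool) (μ : (Fin n → Bool) → ℝ) : ℝ :=
  sSup {r : ℝ | ∃ φ : CNF n, φ.mono ∧ φ.onesided f ∧ 1 ≤ φ.card ∧ r = φ.pr μ / φ.card}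

/-- `D⁺(f)`: the minimum of `D⁺_μ(f)` over distributions `μ` on `f⁻¹(1)`. -/
noncomputable def DPlus {n : ℕ} (f : (Fin n → Bool) → Bool) : ℝ :=
  sInf {r : ℝ | ∃ μ, IsDistOn μ f ∧ r = DmuPlus f μ}

/-- A list of CNF formulas computes `f` as their pointwise disjunction. -/
def ComputedByOr {n : ℕ} (L : List (CNF n)) (f : (Fin n → Bool) → Bool) : Prop :=
  ∀ x, f x = true ↔ ∃ φ ∈ L, φ.sat x

/-- `L₃(f)`: the minimum size (total number of clauses) of a depth-3 formula computing `f`. -/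
noncomputable def L3 {n : ℕ} (f : (Fin n → Bool) → Bool) : ℕ :=
  sInf {s : ℕ | ∃ L : List (CNF n), ComputedByOr L f ∧ s = (L.map Finset.card).sum}

/-- `L₃⁺(f)`: the minimum size of a depth-3 monotone formula computing `f`. -/
noncomputable def L3Plus {n : ℕ} (f : (Fin n → Bool) → Bool) : ℕ :=
  sInf {s : ℕ | ∃ L : List (CNF n), (∀ φ ∈ L, φ.mono) ∧ ComputedByOr L f ∧
    s = (L.map Finset.card).sum}

/-- The number of ones in a Boolean input. -/
def ones {n : ℕ} (x : Fin n → Bool) : ℕ := (Finset.univ.filter fun i => x i = true).card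

/-- The parity function: `1` iff the number of ones is odd. -/
def parityF (n : ℕ) : (Fin n → Bool) → Bool := fun x => decide (ones x % 2 = 1)

/-- The majority function: `1` iff the number of ones is at least `n/2`. -/
def majF (n : ℕ) : (Fin n → Bool) → Bool := fun x => decide (n ≤ 2 * ones x)

/-- `Pr_{x uniform in f⁻¹(1)}[φ(x) = 1]`. -/
noncomputable def prUnif {n : ℕ} (f : (Fin n → Bool) → Bool) (φ : CNF n) : ℝ :=
  ((Finset.univ.filter fun x => f x = true ∧ φ.sat x).card : ℝ) /
    ((Finset.univ.filter fun x => f x = true).card : ℝ)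

/-- `x` is an isolated solution of `φ`: `φ(x)=1` and `φ(y)=0` for every `y`
differing from `x` in exactly one coordinate. -/
def IsIsolated {n : ℕ} (φ : CNF n) (x : Fin n → Bool) : Prop :=
  φ.sat x ∧ ∀ y : Fin n → Bool, hammingDist x y = 1 → ¬ φ.sat y

/-- The coordinate carrying `x_i`. -/
def cx {n : ℕ} (i : Fin (n / 2)) : Fin n := ⟨i, by omega⟩

/-- The coordinate carrying `y_i`. -/
def cy {n : ℕ} (i : Fin (n / 2)) : Fin n := ⟨n / 2 + i, by omega⟩

theorem cx_inj {n : ℕ} {i j : Fin (n / 2)} : cx i = cx j ↔ i = j := by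
  simp [cx, Fin.ext_iff]

theorem cy_inj {n : ℕ} {i j : Fin (n / 2)} : cy i = cy j ↔ i = j := by
  simp [cy, Fin.ext_iff]

theorem cx_ne_cy {n : ℕ} (i j : Fin (n / 2)) : cx i ≠ cy j := by
  intro h
  simp only [cx, cy, Fin.ext_iff] at h
  omega

/-- The function `⋁ i, (x_i ∧ y_i)`. -/
def pairF (n : ℕ) (x : Fin n → Bool) : Bool :=
  decide (∃ i : Fin (n / 2), x (cx i) = true ∧ x (cy i) = true)

/-- The minimal one `p_i` of `pairF`: ones at `x_i` and `y_i` only. -/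
def pt {n : ℕ} (i : Fin (n / 2)) : Fin n → Bool := fun k => decide (k = cx i ∨ k = cy i)

/-- The zero of `pairF` with `x = z` and `y = ¬z`; a possible last unpaired coordinate is `0`. -/
def zeroPt {n : ℕ} (z : Fin (n / 2) → Bool) : Fin n → Bool := fun k =>
  decide (∃ i, (k = cx i ∧ z i = true) ∨ (k = cy i ∧ z i = false))

theorem zeroPt_cx {n : ℕ} (z : Fin (n / 2) → Bool) (i : Fin (n / 2)) :
    zeroPt z (cx i) = z i := by
  simp [zeroPt, cx_inj, cx_ne_cy]

theorem zeroPt_cy {n : ℕ} (z : Fin (n / 2) → Bool) (i : Fin (n / 2)) :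
    zeroPt z (cy i) = !z i := by
  simp [zeroPt, cy_inj, (cx_ne_cy _ _).symm]

/-- The uniform distribution on the points `p_i`. -/
noncomputable def unifPt (n : ℕ) (x : Fin n → Bool) : ℝ :=
  (∑ i : Fin (n / 2), if x = pt i then (1 : ℝ) else 0) / (n / 2 : ℕ)

theorem pr_unifPt {n : ℕ} (φ : CNF n) :
    φ.pr (unifPt n) =
      (∑ i : Fin (n / 2), if φ.sat (pt i) then (1 : ℝ) else 0) / (n / 2 : ℕ) := by
  unfold CNF.pr unifPt
  have h : ∀ x : Fin n → Bool,
      (if φ.sat x then (∑ i : Fin (n / 2), if x = pt i then (1 : ℝ) else 0) / (n / 2 : ℕ) else 0)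
        = (∑ i : Fin (n / 2), if x = pt i then (if φ.sat x then (1 : ℝ) else 0) else 0)
          / (n / 2 : ℕ) := by
    intro x
    split_ifs <;> simp
  simp_rw [h]
  rw [← Finset.sum_div, Finset.sum_comm]
  simp

theorem isDistOn_unifPt {n : ℕ} (hm : 0 < n / 2) : IsDistOn (unifPt n) (pairF n) := by
  refine ⟨fun x => ?_, fun x hx => ?_, ?_⟩
  · unfold unifPt
    exact div_nonneg (Finset.sum_nonneg fun i _ => by split_ifs <;> simp) (Nat.cast_nonneg _)
  · unfold unifPt
    rw [Finset.sum_eq_zero, zero_div]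
    intro i _
    rw [if_neg]
    rintro rfl
    simp only [pairF, decide_eq_false_iff_not] at hx
    exact hx ⟨i, by simp [pt], by simp [pt]⟩
  -- The total mass is the probability of the empty CNF
  · have h := pr_unifPt (n := n) (∅ : CNF n)
    have hm' : ((n / 2 : ℕ) : ℝ) ≠ 0 := by exact_mod_cast hm.ne'
    simpa [CNF.pr, CNF.sat, hm'] using h

/-- The nonmonotone CNF `(⋁ x_i) ∧ ⋀ (¬ x_i ∨ y_i)`. -/
def pairCNF (n : ℕ) : CNF n :=
  insert (Finset.univ.image fun i : Fin (n / 2) => (⟨cx i, false⟩ : Lit n))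
    (Finset.univ.image fun i : Fin (n / 2) => ({⟨cx i, true⟩, ⟨cy i, false⟩} : Clause n))

theorem pairCNF_card (n : ℕ) : (pairCNF n).card ≤ n / 2 + 1 := by
  unfold pairCNF
  refine (Finset.card_insert_le _ _).trans (Nat.succ_le_succ ?_)
  exact Finset.card_image_le.trans (by simp)

theorem pairCNF_sat {n : ℕ} (x : Fin n → Bool) :
    (pairCNF n).sat x ↔ (∃ i : Fin (n / 2), x (cx i) = true) ∧
      ∀ i : Fin (n / 2), x (cx i) = false ∨ x (cy i) = true := by
  simp [pairCNF, CNF.sat, Lit.eval]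

theorem pairCNF_onesided (n : ℕ) : (pairCNF n).onesided (pairF n) := by
  intro x hx
  obtain ⟨⟨i, hi⟩, h⟩ := (pairCNF_sat x).1 hx
  have := h i
  simp only [hi, Bool.true_eq_false, false_or] at this
  simp only [pairF, decide_eq_true_eq]
  exact ⟨i, hi, this⟩

theorem pairCNF_sat_pt {n : ℕ} (i : Fin (n / 2)) : (pairCNF n).sat (pt i) := by
  rw [pairCNF_sat]
  refine ⟨⟨i, by simp [pt]⟩, fun j => ?_⟩
  by_cases h : j = i <;> simp [pt, cx_inj, cy_inj, cx_ne_cy, h]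

/-- Each point carries mass `1/m`, so failing on one of them costs more than `1/(2m)`. -/
theorem sat_pt_of_pr {n : ℕ} {ψ : CNF n} (h : 1 - 1 / (2 * ((n / 2 : ℕ) : ℝ)) ≤ ψ.pr (unifPt n))
    (i : Fin (n / 2)) : ψ.sat (pt i) := by
  by_contra hi
  have hm : (0 : ℝ) < (n / 2 : ℕ) := by exact_mod_cast i.pos
  rw [pr_unifPt, le_div_iff₀ hm] at h
  have hs : (∑ j : Fin (n / 2), if ψ.sat (pt j) then (1 : ℝ) else 0)
      ≤ ∑ j : Fin (n / 2), (1 - if j = i then (1 : ℝ) else 0) := by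
    refine Finset.sum_le_sum fun j _ => ?_
    by_cases hj : j = i
    · subst hj
      simp [hi]
    · simp only [hj, if_false, sub_zero]
      split_ifs <;> norm_num
  simp only [Finset.sum_sub_distrib, Finset.sum_const, Finset.card_univ, Fintype.card_fin,
    nsmul_eq_mul, mul_one, Finset.sum_ite_eq', Finset.mem_univ, if_true] at hs
  have : (1 - 1 / (2 * ((n / 2 : ℕ) : ℝ))) * ((n / 2 : ℕ) : ℝ) = (n / 2 : ℕ) - 1 / 2 := by
    field_simp
  linarith

/-- A monotone CNF below `pairF` that accepts all minimal ones needs a separate clause for each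
zero `zeroPt z`. -/
theorem two_pow_le_card {n : ℕ} {ψ : CNF n} (hmono : ψ.mono) (hone : ψ.onesided (pairF n))
    (hsat : ∀ i : Fin (n / 2), ψ.sat (pt i)) : 2 ^ (n / 2) ≤ ψ.card := by
  have hz : ∀ z : Fin (n / 2) → Bool, ∃ c ∈ ψ, ∀ l ∈ c, l.eval (zeroPt z) ≠ true := by
    intro z
    by_contra! hcon
    have h := hone (zeroPt z) hcon
    simp [pairF, zeroPt_cx, zeroPt_cy] at h
  choose C hC hfalse using hz
  have hkey : ∀ z i, z i = true ↔ (⟨cy i, false⟩ : Lit n) ∈ C z := by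
    intro z i
    constructor
    · intro hzi
      obtain ⟨⟨k, b⟩, hl, he⟩ := hsat i (C z) (hC z)
      obtain rfl : b = false := hmono _ (hC z) _ hl
      simp only [Lit.eval, Bool.false_eq_true, if_false, pt, decide_eq_true_eq] at he
      rcases he with rfl | rfl
      · exact absurd (by simpa [Lit.eval, zeroPt_cx] using hzi) (hfalse z _ hl)
      · exact hl
    · intro hl
      simpa [Lit.eval, zeroPt_cy] using hfalse z _ hl
  have hinj : Function.Injective C := by
    intro z w h
    funext i
    rw [Bool.eq_iff_iff, hkey, hkey, h]
  calc 2 ^ (n / 2) = (Finset.univ : Finset (Fin (n / 2) → Bool)).card := by simp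
    _ ≤ ψ.card := Finset.card_le_card_of_injOn C (fun z _ => hC z) hinj.injOn

/-- exponential separation between nonmonotone and monotone CNF
one-sided approximation of a monotone function. -/
theorem stmt8 : ∃ c δ : ℝ, 0 < c ∧ 0 < δ ∧ ∃ N : ℕ, ∀ n : ℕ, N ≤ n →
    ∃ (f : (Fin n → Bool) → Bool) (μ : (Fin n → Bool) → ℝ) (ε : ℝ),
      (∀ x y : Fin n → Bool, (∀ i, x i ≤ y i) → f x = true → f y = true) ∧
      IsDistOn μ f ∧ 0 < ε ∧ ε < 1 ∧
      (∃ φ : CNF n, (φ.card : ℝ) ≤ (n : ℝ) ^ c ∧ φ.onesided f ∧ ε ≤ φ.pr μ) ∧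
      (∀ ψ : CNF n, ψ.mono → ψ.onesided f → ε ≤ ψ.pr μ →
        (2 : ℝ) ^ ((n : ℝ) ^ δ) ≤ (ψ.card : ℝ)) := by
  refine ⟨1, 1 / 2, one_pos, by norm_num, 16, fun n hn => ?_⟩
  have hm : 8 ≤ n / 2 := by omega
  have hmR : (8 : ℝ) ≤ (n / 2 : ℕ) := by exact_mod_cast hm
  have hinv : 1 / (2 * ((n / 2 : ℕ) : ℝ)) < 1 := by
    rw [div_lt_one (by linarith)]
    linarith
  refine ⟨pairF n, unifPt n, 1 - 1 / (2 * ((n / 2 : ℕ) : ℝ)), ?_, isDistOn_unifPt (n := n) (by omega),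
    by linarith, sub_lt_self _ (by positivity), ⟨pairCNF n, ?_, pairCNF_onesided n, ?_⟩, ?_⟩
  · intro x y hxy hx
    simp only [pairF, decide_eq_true_eq] at hx ⊢
    obtain ⟨i, h₁, h₂⟩ := hx
    exact ⟨i, hxy _ h₁, hxy _ h₂⟩
  · rw [Real.rpow_one]
    have h : (pairCNF n).card ≤ n := (pairCNF_card n).trans (by omega)
    exact_mod_cast h
  · rw [pr_unifPt]
    have hm0 : ((n / 2 : ℕ) : ℝ) ≠ 0 := by linarith
    simp only [pairCNF_sat_pt, if_true, Finset.sum_const, Finset.card_univ, Fintype.card_fin,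
      nsmul_eq_mul, mul_one, div_self hm0]
    exact sub_le_self _ (by positivity)
  · intro ψ hmono hone hpr
    have hcard : (2 : ℝ) ^ (n / 2) ≤ ψ.card := by
      exact_mod_cast two_pow_le_card hmono hone (sat_pt_of_pr hpr)
    refine le_trans ?_ hcard
    rw [← Real.rpow_natCast]
    refine Real.rpow_le_rpow_of_exponent_le one_le_two ?_
    rw [← Real.sqrt_eq_rpow]
    refine Real.sqrt_le_iff.2 ⟨by linarith, ?_⟩
    have h2 : (n : ℝ) ≤ 2 * (n / 2 : ℕ) + 1 := by exact_mod_cast (by omega : n ≤ 2 * (n / 2) + 1)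
    nlinarith
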